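/- arXiv:1309.2793 — 3 statements merged into one kernel-verified Lean document; each statement's English description precedes it below -/
import Mathlib

section
/- Let w be an ε-web and suppose there exists a red graph G for w with I(G) ≥ 0. Then there exists an admissible red graph G̃ for w with I(G̃) ≥ I(G). -/
/-- Combinatorial model of an `ε`-web: regions (connected components of the complement in the
upper half-plane), edges (each adjacent to two regions, i.e. the data of the dual graph `D(w)`),
which regions are faces (bounded regions), which are disks, which triples of regions share a
vertex of the web, and the number of vertexless circles. -/
structure EpsilonWeb where
  /-- the boundary sequence of signs `ε` -/
  boundary : List Bool
  Region : Type
  Edge : Type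
  [fintypeRegion : Fintype Region]
  [fintypeEdge : Fintype Edge]
  [decEqRegion : DecidableEq Region]
  /-- the two regions adjacent to an edge of the web -/
  ends : Edge → Region × Region
  /-- `IsFace f` : the region `f` is a face (a bounded region not touching the boundary line) -/
  IsFace : Region → Prop
  /-- `IsDisk f` : the region `f` is diffeomorphic to a disk -/
  IsDisk : Region → Prop
  /-- `ShareVertex f₁ f₂ f₃` : the three regions share a vertex of the web -/
  ShareVertex : Region → Region → Region → Prop
  /-- number of vertexless circles of the web -/
  circles : ℕ

attribute [instance] EpsilonWeb.fintypeRegion EpsilonWeb.fintypeEdge EpsilonWeb.decEqRegion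

namespace EpsilonWeb

variable (w : EpsilonWeb)

/-- The degree of a region in the dual graph `D(w)`, i.e. its number of sides. -/
def degD (f : w.Region) : ℕ :=
  (Finset.univ.filter fun e : w.Edge => (w.ends e).1 = f).card +
  (Finset.univ.filter fun e : w.Edge => (w.ends e).2 = f).card

/-- A web is non-elliptic if it contains no vertexless circle, no digon and no square,
i.e. every face has at least 6 sides. -/
def NonElliptic : Prop := w.circles = 0 ∧ ∀ f : w.Region, w.IsFace f → 6 ≤ w.degD f

/-- The head of an edge with respect to an orientation `o`. -/
def head (o : w.Edge → Bool) (e : w.Edge) : w.Region :=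
  if o e then (w.ends e).2 else (w.ends e).1

/-- The tail of an edge with respect to an orientation `o`. -/
def tail (o : w.Edge → Bool) (e : w.Edge) : w.Region :=
  if o e then (w.ends e).1 else (w.ends e).2

end EpsilonWeb

/-- A red graph for a web `w` : a non-empty induced subgraph of the dual graph `D(w)` whose
vertices are faces diffeomorphic to disks, no three of which share a vertex of `w`. -/
structure RedGraph (w : EpsilonWeb) where
  verts : Finset w.Region
  nonempty : verts.Nonempty
  disks : ∀ f ∈ verts, w.IsFace f ∧ w.IsDisk f
  noTriple : ∀ f₁ f₂ f₃ : w.Region, w.ShareVertex f₁ f₂ f₃ →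
    ¬(f₁ ∈ verts ∧ f₂ ∈ verts ∧ f₃ ∈ verts)

namespace RedGraph

variable {w : EpsilonWeb} (G : RedGraph w)

/-- The edges of the red graph `G` : being an induced subgraph of `D(w)`, these are all edges of
`D(w)` with both endpoints in `V(G)`. -/
def edges : Finset w.Edge :=
  Finset.univ.filter fun e => (w.ends e).1 ∈ G.verts ∧ (w.ends e).2 ∈ G.verts

/-- The degree of a vertex in the red graph `G`. -/
def degG (f : w.Region) : ℕ :=
  (G.edges.filter fun e => (w.ends e).1 = f).card +
  (G.edges.filter fun e => (w.ends e).2 = f).card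

/-- The external degree `ed(f) = deg_{D(w)}(f) - 2 deg_G(f)`. -/
def extDeg (f : w.Region) : ℤ := (w.degD f : ℤ) - 2 * (G.degG f : ℤ)

/-- The level `i_o(f) = 2 - ed(f)/2 - #{edges of G pointing to f}` of a vertex `f` of `G`
with respect to an orientation `o`. -/
def level (o : w.Edge → Bool) (f : w.Region) : ℤ :=
  2 - G.extDeg f / 2 - ((G.edges.filter fun e => w.head o e = f).card : ℤ)

/-- An orientation is fitting if every vertex has non-negative level. -/
def Fitting (o : w.Edge → Bool) : Prop := ∀ f ∈ G.verts, 0 ≤ G.level o f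

/-- A red graph is admissible if it has a fitting orientation. -/
def Admissible : Prop := ∃ o : w.Edge → Bool, G.Fitting o

/-- The level `I(G)` of the red graph `G` (sum of the levels of its vertices; this quantity
is independent of the orientation: `I(G) = Σ_f (2 - ed(f)/2) - #E(G)`). -/
def ilevel : ℤ := (∑ f ∈ G.verts, (2 - G.extDeg f / 2)) - (G.edges.card : ℤ)

/-- An admissible red graph is exact if its level is 0. -/
def Exact : Prop := G.Admissible ∧ G.ilevel = 0

/-- A red graph is fair if every vertex has external degree at most 4. -/
def Fair : Prop := ∀ f ∈ G.verts, G.extDeg f ≤ 4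

/-- A red graph is nice if every vertex has external degree at most 2. -/
def Nice : Prop := ∀ f ∈ G.verts, G.extDeg f ≤ 2

/-- A minimal admissible red graph: an admissible red graph whose only admissible red
subgraph (admissible red graph with vertex set contained in `V(G)`) is itself. -/
def Minimal : Prop :=
  G.Admissible ∧ ∀ G' : RedGraph w, G'.Admissible → G'.verts ⊆ G.verts → G'.verts = G.verts

/-- Unoriented adjacency in the red graph. -/
def Adj (f g : w.Region) : Prop :=
  ∃ e ∈ G.edges, w.ends e = (f, g) ∨ w.ends e = (g, f)

/-- The red graph is connected. -/
def Connected : Prop :=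
  ∀ f ∈ G.verts, ∀ g ∈ G.verts, Relation.ReflTransGen G.Adj f g

/-- The red graph is a tree : connected and `#E + 1 = #V`. -/
def IsTree : Prop := G.Connected ∧ G.edges.card + 1 = G.verts.card

/-- Oriented adjacency with respect to an orientation `o`. -/
def OAdj (o : w.Edge → Bool) (f g : w.Region) : Prop :=
  ∃ e ∈ G.edges, w.tail o e = f ∧ w.head o e = g

/-- Strong connectivity: any vertex can be reached from any other by an oriented path. -/
def StronglyConnected (o : w.Edge → Bool) : Prop :=
  ∀ f ∈ G.verts, ∀ g ∈ G.verts, Relation.ReflTransGen (G.OAdj o) f g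

/-- A simple (unoriented) cycle with `k` vertices in the red graph: `k` pairwise distinct
vertices joined cyclically by `k` pairwise distinct edges. -/
def IsSimpleCycle (k : ℕ) : Prop :=
  ∃ (v : ZMod k → w.Region) (e : ZMod k → w.Edge),
    Function.Injective v ∧ Function.Injective e ∧
    ∀ i : ZMod k, e i ∈ G.edges ∧
      (w.ends (e i) = (v i, v (i + 1)) ∨ w.ends (e i) = (v (i + 1), v i))

end RedGraph

/-!
A vertex `f` has level `outdeg f - (deg_{D(w)}(f) / 2 - 2)`, so a fitting orientation is one whose
out-degrees meet a demand depending on `w` only, and `I(G)` is the surplus of the number of edges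
of `G` over the total demand of its vertices. By Hall's theorem the demands can be met unless some
set `T` of vertices demands more than the number of edges touching it; deleting such a `T` strictly
increases the surplus. A nonempty `S ⊆ V(G)` of maximal surplus therefore spans an admissible red
graph: its surplus is at least `I(G) ≥ 0`, so deleting all of `S` does not increase it either.
-/

open Finset Function

theorem exists_pairwise_disjoint_card_eq_of_sum_le_card_biUnion {ι α : Type*} [DecidableEq α]
    (t : ι → Finset α) (n : ι → ℕ) (hall : ∀ s : Finset ι, ∑ i ∈ s, n i ≤ #(s.biUnion t)) :
    ∃ u : ι → Finset α, (∀ i, u i ⊆ t i) ∧ (∀ i, #(u i) = n i) ∧ Pairwise (Disjoint on u) := by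
  classical
  -- Hall's marriage theorem, with `n i` copies of each index `i`.
  have hall_copies (A : Finset (Σ i, Fin (n i))) : #A ≤ #(A.biUnion fun x => t x.1) := by
    have hA : A ⊆ (A.image Sigma.fst).sigma fun _ => univ := fun x hx =>
      mem_sigma.2 ⟨mem_image_of_mem _ hx, mem_univ _⟩
    calc #A ≤ ∑ i ∈ A.image Sigma.fst, n i := by simpa using card_le_card hA
      _ ≤ #((A.image Sigma.fst).biUnion t) := hall _
      _ = #(A.biUnion fun x => t x.1) := by rw [image_biUnion]
  obtain ⟨φ, φ_inj, hφ⟩ := (all_card_le_biUnion_card_iff_exists_injective _).1 hall_copies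
  refine ⟨fun i => univ.image fun k => φ ⟨i, k⟩, fun i => ?_, fun i => ?_, fun i j hij => ?_⟩
  · exact image_subset_iff.2 fun k _ => hφ ⟨i, k⟩
  · have φ_i_inj : Injective fun k : Fin (n i) => φ ⟨i, k⟩ := φ_inj.comp sigma_mk_injective
    rw [card_image_of_injective _ φ_i_inj, card_univ, Fintype.card_fin]
  · refine disjoint_left.2 fun a hi hj => hij ?_
    obtain ⟨k, -, rfl⟩ := mem_image.1 hi
    obtain ⟨l, -, hl⟩ := mem_image.1 hj
    exact (congrArg Sigma.fst (φ_inj hl)).symm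

theorem exists_nonempty_subset_forall_le {α β : Type*} [LinearOrder β] {s : Finset α}
    (hs : s.Nonempty) (φ : Finset α → β) :
    ∃ S ⊆ s, S.Nonempty ∧ ∀ S' ⊆ s, S'.Nonempty → φ S' ≤ φ S := by
  classical
  obtain ⟨S, hS, hmax⟩ := exists_max_image {S ∈ s.powerset | S.Nonempty} φ
    ⟨s, mem_filter.2 ⟨mem_powerset_self s, hs⟩⟩
  simp only [mem_filter, mem_powerset, and_imp] at hS hmax
  exact ⟨S, hS.1, hS.2, hmax⟩

namespace EpsilonWeb

variable {w : EpsilonWeb}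

theorem exists_orientation_tail_eq (u : w.Region → Finset w.Edge)
    (u_ends : ∀ f, ∀ e ∈ u f, (w.ends e).1 = f ∨ (w.ends e).2 = f)
    (u_disjoint : Pairwise (Disjoint on u)) :
    ∃ o : w.Edge → Bool, ∀ f, ∀ e ∈ u f, w.tail o e = f := by
  classical
  refine ⟨fun e => decide (e ∈ u (w.ends e).1), fun f e he => ?_⟩
  by_cases hf : (w.ends e).1 = f
  · simp [tail, hf, he]
  · have he' : e ∉ u (w.ends e).1 := disjoint_right.1 (u_disjoint hf) he
    simpa [tail, he'] using (u_ends f e he).resolve_left hf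

theorem exists_orientation_le_card_tail (F : Finset w.Edge) (n : w.Region → ℕ)
    (hn : ∀ T : Finset w.Region,
      ∑ f ∈ T, n f ≤ #{e ∈ F | (w.ends e).1 ∈ T ∨ (w.ends e).2 ∈ T}) :
    ∃ o : w.Edge → Bool, ∀ f, n f ≤ #{e ∈ F | w.tail o e = f} := by
  classical
  let incident (f : w.Region) : Finset w.Edge := {e ∈ F | (w.ends e).1 = f ∨ (w.ends e).2 = f}
  have biUnion_incident (T : Finset w.Region) :
      T.biUnion incident = {e ∈ F | (w.ends e).1 ∈ T ∨ (w.ends e).2 ∈ T} := by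
    ext e
    simp only [incident, mem_biUnion, mem_filter]
    grind
  obtain ⟨u, u_incident, u_card, u_disjoint⟩ :=
    exists_pairwise_disjoint_card_eq_of_sum_le_card_biUnion incident n fun T => by
      simpa only [biUnion_incident] using hn T
  obtain ⟨o, tail_eq⟩ := exists_orientation_tail_eq u
    (fun f e he => (mem_filter.1 (u_incident f he)).2) u_disjoint
  refine ⟨o, fun f => (u_card f).symm.le.trans (card_le_card fun e he => ?_)⟩
  exact mem_filter.2 ⟨(mem_filter.1 (u_incident f he)).1, tail_eq f e he⟩

theorem exists_orientation_int_le_card_tail (F : Finset w.Edge) (S : Finset w.Region)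
    (d : w.Region → ℤ)
    (hd : ∀ T ⊆ S, ∑ f ∈ T, d f ≤ #{e ∈ F | (w.ends e).1 ∈ T ∨ (w.ends e).2 ∈ T}) :
    ∃ o : w.Edge → Bool, ∀ f ∈ S, d f ≤ #{e ∈ F | w.tail o e = f} := by
  let n (f : w.Region) : ℕ := if f ∈ S then (d f).toNat else 0
  suffices hn : ∀ T : Finset w.Region,
      ∑ f ∈ T, n f ≤ #{e ∈ F | (w.ends e).1 ∈ T ∨ (w.ends e).2 ∈ T} by
    obtain ⟨o, ho⟩ := exists_orientation_le_card_tail F n hn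
    refine ⟨o, fun f hf => (Int.self_le_toNat (d f)).trans ?_⟩
    simpa only [n, if_pos hf, Nat.cast_le] using ho f
  intro T
  -- Only the vertices of `S` with nonnegative demand contribute to the sum.
  let T' : Finset w.Region := {f ∈ T | f ∈ S ∧ 0 ≤ d f}
  have hT' : T' ⊆ T := filter_subset _ _
  have sum_eq : ((∑ f ∈ T, n f : ℕ) : ℤ) = ∑ f ∈ T', d f := by
    rw [Nat.cast_sum, sum_filter]
    refine sum_congr rfl fun f _ => ?_
    simp only [n]
    split_ifs <;> grind
  have sum_le : ∑ f ∈ T', d f ≤ #{e ∈ F | (w.ends e).1 ∈ T' ∨ (w.ends e).2 ∈ T'} :=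
    hd T' fun f hf => (mem_filter.1 hf).2.1
  have card_le : #{e ∈ F | (w.ends e).1 ∈ T' ∨ (w.ends e).2 ∈ T'} ≤
      #{e ∈ F | (w.ends e).1 ∈ T ∨ (w.ends e).2 ∈ T} :=
    card_le_card <| monotone_filter_right F fun _ _ => Or.imp (@hT' _) (@hT' _)
  omega

theorem card_filter_tail_add_card_filter_head (F : Finset w.Edge) (o : w.Edge → Bool)
    (f : w.Region) :
    #{e ∈ F | w.tail o e = f} + #{e ∈ F | w.head o e = f} =
      #{e ∈ F | (w.ends e).1 = f} + #{e ∈ F | (w.ends e).2 = f} := by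
  simp only [card_filter, ← sum_add_distrib]
  refine sum_congr rfl fun e _ => ?_
  cases h : o e <;> simp [tail, head, h, add_comm]

/-- The out-degree a region needs in an orientation in order to have nonnegative level. It does
not depend on the red graph, since the contribution of `deg_G` to the external degree turns the
in-degree into the out-degree. -/
def demand (w : EpsilonWeb) (f : w.Region) : ℤ := (w.degD f : ℤ) / 2 - 2

/-- The edges of the subgraph of the dual graph induced on `S`. -/
def inducedEdges (S : Finset w.Region) : Finset w.Edge :=
  {e | (w.ends e).1 ∈ S ∧ (w.ends e).2 ∈ S}

/-- The level `I` of the subgraph induced on `S`, defined for every set of regions and in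
particular for the empty one. -/
def surplus (S : Finset w.Region) : ℤ := #(inducedEdges S) - ∑ f ∈ S, w.demand f

@[simp]
theorem surplus_empty : surplus (∅ : Finset w.Region) = 0 := by
  simp [surplus, inducedEdges]

theorem card_inducedEdges_sdiff_add_card_touching (S T : Finset w.Region) :
    #(inducedEdges (S \ T)) + #{e ∈ inducedEdges S | (w.ends e).1 ∈ T ∨ (w.ends e).2 ∈ T} =
      #(inducedEdges S) := by
  have inducedEdges_sdiff : inducedEdges (S \ T) =
      {e ∈ inducedEdges S | ¬((w.ends e).1 ∈ T ∨ (w.ends e).2 ∈ T)} := by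
    ext e
    simp only [inducedEdges, mem_filter, mem_sdiff, mem_univ, true_and]
    tauto
  rw [inducedEdges_sdiff, add_comm, card_filter_add_card_filter_not]

theorem sum_demand_le_card_touching_of_surplus_sdiff_le {S T : Finset w.Region} (hT : T ⊆ S)
    (h : surplus (S \ T) ≤ surplus S) :
    ∑ f ∈ T, w.demand f ≤ #{e ∈ inducedEdges S | (w.ends e).1 ∈ T ∨ (w.ends e).2 ∈ T} := by
  have card_split := card_inducedEdges_sdiff_add_card_touching S T
  have sum_split := sum_sdiff (f := w.demand) hT
  unfold surplus at h
  omega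

end EpsilonWeb

namespace RedGraph

open EpsilonWeb

variable {w : EpsilonWeb} (G : RedGraph w)

theorem two_sub_extDeg_div_two (f : w.Region) :
    2 - G.extDeg f / 2 = G.degG f - w.demand f := by
  unfold extDeg demand
  omega

theorem level_eq_card_tail_sub_demand (o : w.Edge → Bool) (f : w.Region) :
    G.level o f = #{e ∈ G.edges | w.tail o e = f} - w.demand f := by
  have degG_eq : #{e ∈ G.edges | w.tail o e = f} + #{e ∈ G.edges | w.head o e = f} = G.degG f :=
    card_filter_tail_add_card_filter_head G.edges o f
  rw [level, two_sub_extDeg_div_two]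
  omega

theorem sum_degG : ∑ f ∈ G.verts, G.degG f = 2 * #G.edges := by
  have card_fst : #G.edges = ∑ f ∈ G.verts, #{e ∈ G.edges | (w.ends e).1 = f} :=
    card_eq_sum_card_fiberwise fun _ he => (mem_filter.1 he).2.1
  have card_snd : #G.edges = ∑ f ∈ G.verts, #{e ∈ G.edges | (w.ends e).2 = f} :=
    card_eq_sum_card_fiberwise fun _ he => (mem_filter.1 he).2.2
  simp only [degG, sum_add_distrib, ← card_fst, ← card_snd, two_mul]

theorem ilevel_eq_surplus : G.ilevel = surplus G.verts := by
  have edges_eq : inducedEdges G.verts = G.edges := rfl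
  simp only [ilevel, surplus, edges_eq, two_sub_extDeg_div_two, sum_sub_distrib]
  rw [← Nat.cast_sum, sum_degG]
  push_cast
  ring

theorem admissible_of_forall_surplus_le (h : ∀ S ⊆ G.verts, surplus S ≤ surplus G.verts) :
    G.Admissible := by
  obtain ⟨o, ho⟩ := exists_orientation_int_le_card_tail G.edges G.verts w.demand fun T hT =>
    sum_demand_le_card_touching_of_surplus_sdiff_le hT (h _ sdiff_subset)
  refine ⟨o, fun f hf => ?_⟩
  rw [level_eq_card_tail_sub_demand]
  exact sub_nonneg.2 (ho f hf)

/-- The red subgraph of `G` induced on a nonempty set `S` of its vertices. -/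
def restrict (S : Finset w.Region) (hS : S.Nonempty) (hSG : S ⊆ G.verts) : RedGraph w where
  verts := S
  nonempty := hS
  disks f hf := G.disks f (hSG hf)
  noTriple f₁ f₂ f₃ hf := fun ⟨h₁, h₂, h₃⟩ => G.noTriple f₁ f₂ f₃ hf ⟨hSG h₁, hSG h₂, hSG h₃⟩

end RedGraph

/-- Let `w` be an `ε`-web and suppose there exists a red graph `G` for `w` with `I(G) ≥ 0`.
Then there exists an admissible red graph `G̃` for `w` with `I(G̃) ≥ I(G)`. -/
theorem exists_admissible_of_nonneg_level (w : EpsilonWeb) (G : RedGraph w)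
    (hG : 0 ≤ G.ilevel) :
    ∃ Gt : RedGraph w, Gt.Admissible ∧ G.ilevel ≤ Gt.ilevel := by
  obtain ⟨S, hSG, hS, hmax⟩ := exists_nonempty_subset_forall_le G.nonempty EpsilonWeb.surplus
  have level_le : G.ilevel ≤ EpsilonWeb.surplus S :=
    G.ilevel_eq_surplus.trans_le (hmax G.verts subset_rfl G.nonempty)
  refine ⟨G.restrict S hS hSG, RedGraph.admissible_of_forall_surplus_le _ fun S' hS' => ?_, ?_⟩
  · obtain rfl | hne := S'.eq_empty_or_nonempty
    · rw [EpsilonWeb.surplus_empty]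
      exact hG.trans level_le
    · exact hmax S' (hS'.trans hSG) hne
  · rwa [RedGraph.ilevel_eq_surplus (G.restrict S hS hSG)]
end

section
/- Let w be an ε-web and G a minimal admissible red graph for w, endowed with a fitting orientation. Then there is no non-trivial partition of V(G) into sets V₁ and V₂ such that every edge between a vertex of V₁ and a vertex of V₂ is oriented from V₁ to V₂. In particular G has no leaf, and if it has at least 2 vertices it is not a tree. -/
/-!
Writing the level of a vertex as `2 - deg_{D(w)}(f) / 2 + #{edges of G leaving f}` shows that the
levels are unchanged when `G` is restricted to a set of vertices which no edge of `G` leaves. Such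
a set therefore induces an admissible red graph, so in a minimal `G` it is empty or all of `V(G)`.
The set `V₂` of a directed cut, a sink on its own, and the complement of a source are sets of this
kind. Hence if `G` has at least two vertices, every vertex has an incoming and an outgoing edge:
no degree is `1`, and there are at least as many edges as vertices.
-/

namespace EpsilonWeb

variable (w : EpsilonWeb)

theorem ends_eq_tail_head_or (o : w.Edge → Bool) (e : w.Edge) :
    w.ends e = (w.tail o e, w.head o e) ∨ w.ends e = (w.head o e, w.tail o e) := by
  cases h : o e <;> simp [tail, head, h]

end EpsilonWeb

namespace RedGraph

section Degrees

variable {w : EpsilonWeb} (G : RedGraph w) (o : w.Edge → Bool) (f : w.Region)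

/-- The number of edges of `G` pointing to `f`, the term subtracted in the level of `f`. A loop
at `f` counts once. -/
def inDeg : ℕ := (G.edges.filter fun e => w.head o e = f).card

/-- The number of edges of `G` leaving `f`, in terms of which the level of `f` does not involve
the external degree. A loop at `f` counts once. -/
def outDeg : ℕ := (G.edges.filter fun e => w.tail o e = f).card

theorem mem_edges_iff_tail_head {e : w.Edge} :
    e ∈ G.edges ↔ w.tail o e ∈ G.verts ∧ w.head o e ∈ G.verts := by
  rcases w.ends_eq_tail_head_or o e with h | h <;> simp [edges, h, and_comm]

theorem degG_eq_inDeg_add_outDeg : G.degG f = G.inDeg o f + G.outDeg o f := by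
  simp only [degG, inDeg, outDeg, Finset.card_filter, ← Finset.sum_add_distrib]
  refine Finset.sum_congr rfl fun e _ => ?_
  rcases w.ends_eq_tail_head_or o e with h | h <;> simp [h, add_comm]

theorem level_eq_add_outDeg : G.level o f = 2 - (w.degD f : ℤ) / 2 + G.outDeg o f := by
  have hdeg := G.degG_eq_inDeg_add_outDeg o f
  have hlevel : G.level o f = 2 - G.extDeg f / 2 - G.inDeg o f := rfl
  rw [hlevel, extDeg]
  omega

theorem sum_outDeg_eq_card_edges : ∑ f ∈ G.verts, G.outDeg o f = G.edges.card :=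
  (Finset.card_eq_sum_card_fiberwise fun _ he => ((G.mem_edges_iff_tail_head o).1 he).1).symm

theorem degG_eq_two_mul_card_edges_of_verts_eq_singleton (h : G.verts = {f}) :
    G.degG f = 2 * G.edges.card := by
  have hends : ∀ e ∈ G.edges, (w.ends e).1 = f ∧ (w.ends e).2 = f := fun e he => by
    simpa [edges, h] using he
  rw [degG, Finset.filter_true_of_mem fun e he => (hends e he).1,
    Finset.filter_true_of_mem fun e he => (hends e he).2, two_mul]

end Degrees

section OutClosed

variable {w : EpsilonWeb} {G : RedGraph w} {o : w.Edge → Bool} {S : Finset w.Region}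
  {f : w.Region}

/-- The red graph induced on a non-empty set of vertices of `G`. -/
def induce (G : RedGraph w) (S : Finset w.Region) (hne : S.Nonempty) (hS : S ⊆ G.verts) :
    RedGraph w where
  verts := S
  nonempty := hne
  disks f hf := G.disks f (hS hf)
  noTriple f₁ f₂ f₃ hv h := G.noTriple f₁ f₂ f₃ hv ⟨hS h.1, hS h.2.1, hS h.2.2⟩

/-- A set of regions is out-closed if no edge of `G` leaves it. Vertex sets of this kind are the
ones on which a fitting orientation restricts to a fitting orientation. -/
def OutClosed (G : RedGraph w) (o : w.Edge → Bool) (S : Finset w.Region) : Prop :=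
  ∀ e ∈ G.edges, w.tail o e ∈ S → w.head o e ∈ S

theorem OutClosed.outDeg_induce (h : G.OutClosed o S) (hS : S ⊆ G.verts) (hf : f ∈ S) :
    (G.induce S ⟨f, hf⟩ hS).outDeg o f = G.outDeg o f := by
  refine congrArg Finset.card (Finset.ext fun e => ?_)
  simp only [Finset.mem_filter, and_congr_left_iff]
  rintro rfl
  rw [mem_edges_iff_tail_head _ o]
  exact ⟨fun he => (G.mem_edges_iff_tail_head o).2 ⟨hS he.1, hS he.2⟩,
    fun he => ⟨hf, h e he hf⟩⟩

theorem Fitting.induce (ho : G.Fitting o) (h : G.OutClosed o S) (hne : S.Nonempty)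
    (hS : S ⊆ G.verts) : (G.induce S hne hS).Fitting o := by
  intro f hf
  rw [level_eq_add_outDeg, h.outDeg_induce hS hf, ← level_eq_add_outDeg]
  exact ho f (hS hf)

theorem Minimal.eq_verts_of_outClosed (hG : G.Minimal) (ho : G.Fitting o)
    (h : G.OutClosed o S) (hne : S.Nonempty) (hS : S ⊆ G.verts) : S = G.verts :=
  hG.2 (G.induce S hne hS) ⟨o, ho.induce h hne hS⟩ hS

theorem outClosed_of_cut {V₁ V₂ : Finset w.Region} (hunion : V₁ ∪ V₂ = G.verts)
    (hcut : ∀ e ∈ G.edges,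
      (((w.ends e).1 ∈ V₁ ∧ (w.ends e).2 ∈ V₂) ∨
        ((w.ends e).1 ∈ V₂ ∧ (w.ends e).2 ∈ V₁)) → w.head o e ∈ V₂) :
    G.OutClosed o V₂ := by
  intro e he htail
  have hhead : w.head o e ∈ V₁ ∪ V₂ := hunion ▸ ((G.mem_edges_iff_tail_head o).1 he).2
  rcases Finset.mem_union.1 hhead with hhead₁ | hhead₂
  · refine hcut e he ?_
    rcases w.ends_eq_tail_head_or o e with h | h <;> simp [h, htail, hhead₁]
  · exact hhead₂

theorem outClosed_singleton_of_outDeg_eq_zero (h : G.outDeg o f = 0) : G.OutClosed o {f} := by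
  intro e he htail
  rw [outDeg, Finset.card_eq_zero, Finset.filter_eq_empty_iff] at h
  exact absurd (Finset.mem_singleton.1 htail) (h he)

theorem outClosed_erase_of_inDeg_eq_zero (h : G.inDeg o f = 0) :
    G.OutClosed o (G.verts.erase f) := by
  intro e he _
  rw [inDeg, Finset.card_eq_zero, Finset.filter_eq_empty_iff] at h
  exact Finset.mem_erase.2 ⟨h he, ((G.mem_edges_iff_tail_head o).1 he).2⟩

end OutClosed

namespace Minimal

variable {w : EpsilonWeb} {G : RedGraph w} {o : w.Edge → Bool} {f : w.Region}

theorem outDeg_pos (hG : G.Minimal) (ho : G.Fitting o) (hnt : G.verts.Nontrivial)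
    (hf : f ∈ G.verts) : 0 < G.outDeg o f := by
  refine Nat.pos_of_ne_zero fun hzero => hnt.ne_singleton (a := f) (Eq.symm ?_)
  exact hG.eq_verts_of_outClosed ho (outClosed_singleton_of_outDeg_eq_zero hzero)
    (Finset.singleton_nonempty f) (Finset.singleton_subset_iff.2 hf)

theorem inDeg_pos (hG : G.Minimal) (ho : G.Fitting o) (hnt : G.verts.Nontrivial)
    (hf : f ∈ G.verts) : 0 < G.inDeg o f := by
  refine Nat.pos_of_ne_zero fun hzero => Finset.erase_ne_self.2 hf ?_
  exact hG.eq_verts_of_outClosed ho (outClosed_erase_of_inDeg_eq_zero hzero)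
    hnt.erase_nonempty (Finset.erase_subset f G.verts)

theorem degG_ne_one (hG : G.Minimal) (hf : f ∈ G.verts) : G.degG f ≠ 1 := by
  obtain ⟨o, ho⟩ := hG.1
  rcases Finset.eq_singleton_or_nontrivial hf with hsingle | hnt
  · have hdeg := G.degG_eq_two_mul_card_edges_of_verts_eq_singleton f hsingle
    omega
  · have hdeg := G.degG_eq_inDeg_add_outDeg o f
    have hin := hG.inDeg_pos ho hnt hf
    have hout := hG.outDeg_pos ho hnt hf
    omega

theorem card_verts_le_card_edges (hG : G.Minimal) (hnt : G.verts.Nontrivial) :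
    G.verts.card ≤ G.edges.card := by
  obtain ⟨o, ho⟩ := hG.1
  calc G.verts.card = ∑ _f ∈ G.verts, 1 := Finset.card_eq_sum_ones _
    _ ≤ ∑ f ∈ G.verts, G.outDeg o f := Finset.sum_le_sum fun _ hf => hG.outDeg_pos ho hnt hf
    _ = G.edges.card := G.sum_outDeg_eq_card_edges o

end Minimal

end RedGraph

/-- Let `w` be an `ε`-web and `G` a minimal admissible red graph for `w`, endowed with a fitting
orientation `o`.  Then there is no non-trivial partition of `V(G)` into sets `V₁` and `V₂` such
that every edge between a vertex of `V₁` and a vertex of `V₂` is oriented from `V₁` to `V₂`.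
In particular `G` has no leaf, and if it has at least 2 vertices it is not a tree. -/
theorem minimal_red_graph_no_cut (w : EpsilonWeb) (G : RedGraph w) (hG : G.Minimal)
    (o : w.Edge → Bool) (ho : G.Fitting o) :
    (¬ ∃ V₁ V₂ : Finset w.Region, V₁.Nonempty ∧ V₂.Nonempty ∧ Disjoint V₁ V₂ ∧
        V₁ ∪ V₂ = G.verts ∧
        ∀ e ∈ G.edges,
          (((w.ends e).1 ∈ V₁ ∧ (w.ends e).2 ∈ V₂) ∨
            ((w.ends e).1 ∈ V₂ ∧ (w.ends e).2 ∈ V₁)) → w.head o e ∈ V₂) ∧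
    (∀ f ∈ G.verts, G.degG f ≠ 1) ∧
    (2 ≤ G.verts.card → ¬ G.IsTree) := by
  refine ⟨?_, fun f hf => hG.degG_ne_one hf, fun hcard htree => ?_⟩
  · rintro ⟨V₁, V₂, ⟨f, hf⟩, hne₂, hdisj, hunion, hcut⟩
    have hclosed : G.OutClosed o V₂ := RedGraph.outClosed_of_cut hunion hcut
    have hV₂ : V₂ = G.verts :=
      hG.eq_verts_of_outClosed ho hclosed hne₂ (hunion ▸ Finset.subset_union_right)
    have hf₂ : f ∈ V₂ := hV₂ ▸ hunion ▸ Finset.mem_union_left V₂ hf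
    exact Finset.disjoint_left.1 hdisj hf hf₂
  · have hle := hG.card_verts_le_card_edges (Finset.one_lt_card_iff_nontrivial.1 hcard)
    have htree_card := htree.2
    omega
end

section
/- If G is an admissible red graph for a non-elliptic ε-web w, then G is not a tree. -/
/-!
Summing vertex levels over `G` counts every edge once as incoming, so the sum is the level `I(G)`,
whatever the orientation; a fitting orientation therefore forces `0 ≤ I(G)`. If every vertex of `G`
has at least six sides, its contribution `2 - ed(f)/2` to `I(G)` is at most `deg_G(f) - 1`, and the
handshake identity gives `I(G) ≤ 2 #E - #V - #E = #E - #V`. Hence `#V ≤ #E`, whereas a tree has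
`#V = #E + 1`.
-/

namespace RedGraph

variable {w : EpsilonWeb} {G : RedGraph w}

theorem mem_edges {e : w.Edge} :
    e ∈ G.edges ↔ (w.ends e).1 ∈ G.verts ∧ (w.ends e).2 ∈ G.verts := by
  simp [edges]

theorem head_mem_verts (o : w.Edge → Bool) {e : w.Edge} (he : e ∈ G.edges) :
    w.head o e ∈ G.verts := by
  obtain ⟨h₁, h₂⟩ := mem_edges.mp he
  unfold EpsilonWeb.head
  split <;> assumption

variable (G)

theorem sum_card_edges_head_eq (o : w.Edge → Bool) :
    ∑ f ∈ G.verts, (G.edges.filter fun e => w.head o e = f).card = G.edges.card :=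
  (Finset.card_eq_sum_card_fiberwise fun _ he => head_mem_verts o he).symm

theorem sum_degG_eq_twice_card_edges : ∑ f ∈ G.verts, G.degG f = 2 * G.edges.card := by
  have sum_fst : G.edges.card = ∑ f ∈ G.verts, (G.edges.filter fun e => (w.ends e).1 = f).card :=
    Finset.card_eq_sum_card_fiberwise fun _ he => (mem_edges.mp he).1
  have sum_snd : G.edges.card = ∑ f ∈ G.verts, (G.edges.filter fun e => (w.ends e).2 = f).card :=
    Finset.card_eq_sum_card_fiberwise fun _ he => (mem_edges.mp he).2
  simp only [degG, Finset.sum_add_distrib]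
  rw [← sum_fst, ← sum_snd, two_mul]

theorem sum_level_eq_ilevel (o : w.Edge → Bool) : ∑ f ∈ G.verts, G.level o f = G.ilevel := by
  simp only [level, ilevel, Finset.sum_sub_distrib]
  rw [← Nat.cast_sum, sum_card_edges_head_eq]

variable {G}

theorem Admissible.ilevel_nonneg (hG : G.Admissible) : 0 ≤ G.ilevel := by
  obtain ⟨o, ho⟩ := hG
  rw [← G.sum_level_eq_ilevel o]
  exact Finset.sum_nonneg ho

theorem two_sub_extDeg_half_le {f : w.Region} (hf : 6 ≤ w.degD f) :
    2 - G.extDeg f / 2 ≤ (G.degG f : ℤ) - 1 := by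
  unfold extDeg
  omega

theorem ilevel_le_card_edges_sub_card_verts (hdeg : ∀ f ∈ G.verts, 6 ≤ w.degD f) :
    G.ilevel ≤ (G.edges.card : ℤ) - G.verts.card := by
  calc G.ilevel
      ≤ ∑ f ∈ G.verts, ((G.degG f : ℤ) - 1) - G.edges.card :=
        sub_le_sub_right (Finset.sum_le_sum fun f hf => two_sub_extDeg_half_le (hdeg f hf)) _
    _ = (2 * G.edges.card - G.verts.card) - G.edges.card := by
        rw [Finset.sum_sub_distrib, ← Nat.cast_sum, sum_degG_eq_twice_card_edges]
        simp
    _ = G.edges.card - G.verts.card := by ring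

theorem Admissible.card_verts_le_card_edges (hG : G.Admissible)
    (hdeg : ∀ f ∈ G.verts, 6 ≤ w.degD f) : G.verts.card ≤ G.edges.card := by
  have := hG.ilevel_nonneg.trans (ilevel_le_card_edges_sub_card_verts hdeg)
  omega

end RedGraph

theorem admissible_red_graph_not_tree_general {w : EpsilonWeb} {G : RedGraph w}
    (hdeg : ∀ f ∈ G.verts, 6 ≤ w.degD f) (hG : G.Admissible) : ¬ G.IsTree := by
  rintro ⟨-, hcard⟩
  have := hG.card_verts_le_card_edges hdeg
  omega

/-- If `G` is an admissible red graph for a non-elliptic `ε`-web `w`, then `G` is not a tree. -/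
theorem admissible_red_graph_not_tree (w : EpsilonWeb) (hw : w.NonElliptic)
    (G : RedGraph w) (hG : G.Admissible) : ¬ G.IsTree := by
  exact admissible_red_graph_not_tree_general (fun f hf => hw.2 f (G.disks f hf).1) hG
end
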